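/- arXiv:2006.06058 — 3 statements merged into one kernel-verified Lean document; each statement's English description precedes it below -/
import Mathlib

section
/- Let k be a natural number and let f : ℝ^k × ℝ → ℝ be infinitely differentiable with f(x,0) = 0 for every x ∈ ℝ^k. Then there exists an infinitely differentiable function g : ℝ^k × ℝ → ℝ such that f(x,s) = s·g(x,s) for all (x,s) ∈ ℝ^k × ℝ, and moreover g(x,0) = (∂f/∂s)(x,0) and (∂g/∂s)(x,0) = (1/2)·(∂²f/∂s²)(x,0) for every x ∈ ℝ^k. (This is the paper's Lemma 'milnor lemma'.) -/
/-!
Hadamard's formula: since `f (x, 0) = 0`, the fundamental theorem of calculus along the segment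
`t ↦ (x, t * s)` gives `f (x, s) = s * ∫ t in 0..1, ∂f/∂s (x, t * s)`, and `g` is this integral.
The point is the smoothness of `g`, which is differentiation under the integral sign, iterated
(`contDiff_parametric_integral`). Both formulas at `s = 0` then follow by differentiating the
identity `f (x, s) = s * g (x, s)` once and twice in `s`.
-/

/-- Integrals over `[0, 1]` preserve the class `C^n` in the parameter. The derivative of the
integral is the integral of the partial derivative in the parameter, so the claim follows by
induction on `n`; the target space varies in the induction. Local compactness of the parameter
space supplies the dominating constant. -/
theorem contDiff_parametric_integral {E : Type} [NormedAddCommGroup E] [NormedSpace ℝ E]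
    [ProperSpace E] (n : ℕ) :
    ∀ {G : Type} [NormedAddCommGroup G] [NormedSpace ℝ G]
      (F : E × ℝ → G), ContDiff ℝ n F → ContDiff ℝ n (fun x => ∫ t in (0 : ℝ)..1, F (x, t)) := by
  induction n with
  | zero =>
    intro G _ _ F hF
    have hc : Continuous F := hF.continuous
    exact contDiff_zero.2
      (intervalIntegral.continuous_parametric_intervalIntegral_of_continuous'
        (f := fun x t => F (x, t)) hc 0 1)
  | succ n ih =>
    intro G _ _ F hF
    have hF' : ContDiff ℝ n
        (fun p : E × ℝ => (fderiv ℝ F p).comp (ContinuousLinearMap.inl ℝ E ℝ)) :=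
      (hF.fderiv_right (m := n) (by norm_cast)).clm_comp contDiff_const
    refine contDiff_succ_iff_hasFDerivAt.2 ⟨_, ih _ hF', fun x => ?_⟩
    have hFc : Continuous F := hF.continuous
    have hFc' := hF'.continuous
    obtain ⟨C, hC⟩ := ((isCompact_closedBall x 1).prod
      (isCompact_Icc (a := (0 : ℝ)) (b := 1))).exists_bound_of_continuousOn hFc'.continuousOn
    refine intervalIntegral.hasFDerivAt_integral_of_dominated_of_fderiv_le
      (F := fun x t => F (x, t))
      (F' := fun x t => (fderiv ℝ F (x, t)).comp (ContinuousLinearMap.inl ℝ E ℝ))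
      (bound := fun _ => C) (Metric.closedBall_mem_nhds x one_pos) ?_ ?_ ?_ ?_ ?_ ?_
    · exact Filter.Eventually.of_forall fun y =>
        (hFc.comp (Continuous.prodMk_right y)).aestronglyMeasurable
    · exact (hFc.comp (Continuous.prodMk_right x)).intervalIntegrable _ _
    · exact (hFc'.comp (Continuous.prodMk_right x)).aestronglyMeasurable
    · refine Filter.Eventually.of_forall fun t ht y hy => hC (y, t) ⟨hy, ?_⟩
      rw [Set.uIoc_of_le zero_le_one] at ht
      exact Set.Ioc_subset_Icc_self ht
    · exact intervalIntegrable_const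
    · refine Filter.Eventually.of_forall fun t _ y _ => ?_
      have h1 : HasFDerivAt F (fderiv ℝ F (y, t)) (y, t) :=
        (hF.differentiable (by simp)).differentiableAt.hasFDerivAt
      exact h1.comp y (hasFDerivAt_prodMk_left y t)

/-- **Milnor's lemma.** If `f : ℝᵏ × ℝ → ℝ` is smooth and vanishes on `ℝᵏ × {0}`,
then `f (x, s) = s * g (x, s)` for a smooth function `g` with
`g (x, 0) = ∂f/∂s (x, 0)` and `∂g/∂s (x, 0) = (1/2) ∂²f/∂s² (x, 0)`. -/
theorem milnor_lemma (k : ℕ) (f : (Fin k → ℝ) × ℝ → ℝ)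
    (hf : ContDiff ℝ (⊤ : ℕ∞) f) (hf0 : ∀ x : Fin k → ℝ, f (x, 0) = 0) :
    ∃ g : (Fin k → ℝ) × ℝ → ℝ, ContDiff ℝ (⊤ : ℕ∞) g ∧
      (∀ (x : Fin k → ℝ) (s : ℝ), f (x, s) = s * g (x, s)) ∧
      (∀ x : Fin k → ℝ, g (x, 0) = deriv (fun s => f (x, s)) 0) ∧
      (∀ x : Fin k → ℝ,
        deriv (fun s => g (x, s)) 0 = (1 / 2) * deriv (deriv (fun s => f (x, s))) 0) := by
  have hD : ContDiff ℝ (⊤ : ℕ∞) (fun p : (Fin k → ℝ) × ℝ => fderiv ℝ f p (0, 1)) :=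
    (hf.fderiv_right (m := (⊤ : ℕ∞)) (by norm_cast)).clm_apply contDiff_const
  obtain ⟨g, hgdef⟩ : ∃ g : (Fin k → ℝ) × ℝ → ℝ,
      g = fun p => ∫ t in (0 : ℝ)..1, fderiv ℝ f (p.1, t * p.2) (0, 1) := ⟨_, rfl⟩
  have hH : ContDiff ℝ (⊤ : ℕ∞)
      (fun q : ((Fin k → ℝ) × ℝ) × ℝ => fderiv ℝ f (q.1.1, q.2 * q.1.2) (0, 1)) :=
    hD.comp (g := fun p : (Fin k → ℝ) × ℝ => fderiv ℝ f p (0, 1))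
      (f := fun q : ((Fin k → ℝ) × ℝ) × ℝ => (q.1.1, q.2 * q.1.2)) (by fun_prop)
  have hg : ContDiff ℝ (⊤ : ℕ∞) g := by
    rw [hgdef]
    exact contDiff_infty.2 fun n =>
      contDiff_parametric_integral n _ (contDiff_infty.1 hH n)
  have hfg : ∀ (x : Fin k → ℝ) (s : ℝ), f (x, s) = s * g (x, s) := by
    intro x s
    have hderiv : ∀ t ∈ Set.uIcc (0 : ℝ) 1, HasDerivAt (fun t : ℝ => f (x, t * s))
        (s * fderiv ℝ f (x, t * s) (0, 1)) t := by
      intro t _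
      have h1 : HasFDerivAt f (fderiv ℝ f (x, t * s)) (x, t * s) :=
        (hf.differentiable (by simp)).differentiableAt.hasFDerivAt
      have h2 : HasDerivAt (fun t : ℝ => (x, t * s)) ((0 : Fin k → ℝ), s) t :=
        (hasDerivAt_const t x).prodMk (by simpa using (hasDerivAt_id t).mul_const s)
      have h3 := h1.comp_hasDerivAt t h2
      have h4 : ((0 : Fin k → ℝ), s) = s • ((0 : Fin k → ℝ), (1 : ℝ)) := by simp
      rw [h4, map_smul, smul_eq_mul] at h3
      exact h3
    have hcont : Continuous (fun t : ℝ => s * fderiv ℝ f (x, t * s) (0, 1)) :=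
      continuous_const.mul (hH.continuous.comp (Continuous.prodMk_right (x, s)))
    have h := intervalIntegral.integral_eq_sub_of_hasDerivAt hderiv
      (hcont.intervalIntegrable 0 1)
    rw [intervalIntegral.integral_const_mul] at h
    simp only [hgdef, h, one_mul, zero_mul, hf0, sub_zero]
  have hgx : ∀ x : Fin k → ℝ, ContDiff ℝ (⊤ : ℕ∞) (fun s => g (x, s)) := fun x =>
    hg.comp (contDiff_prodMk_right x)
  have hd1 : ∀ x : Fin k → ℝ, deriv (fun s => f (x, s)) =
      fun s => g (x, s) + s * deriv (fun s => g (x, s)) s := by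
    intro x
    funext s
    have h1 := ((hgx x).differentiable (by simp)).differentiableAt (x := s) |>.hasDerivAt
    simp only [hfg]
    refine ((hasDerivAt_id s).mul h1).deriv.trans ?_
    simp
  refine ⟨g, hg, hfg, fun x => ?_, fun x => ?_⟩
  · simp [hd1]
  · have h1 := ((hgx x).differentiable (by simp)).differentiableAt (x := 0) |>.hasDerivAt
    have hg' : ContDiff ℝ (⊤ : ℕ∞) (deriv (fun s => g (x, s))) :=
      (contDiff_infty_iff_deriv.1 (hgx x)).2
    have h2 := (hg'.differentiable (by simp)).differentiableAt (x := 0) |>.hasDerivAt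
    have h3 := (h1.add ((hasDerivAt_id (0 : ℝ)).mul h2)).deriv
    have h4 : deriv (deriv (fun s => f (x, s))) 0 = 2 * deriv (fun s => g (x, s)) 0 := by
      rw [hd1]
      refine h3.trans ?_
      simp only [id, one_mul, zero_mul, add_zero]
      ring
    rw [h4]
    ring
end

section
/- Let k be a natural number and let f : ℝ^k × ℝ → ℝ be infinitely differentiable with f(x,0) = 0 and (∂f/∂s)(x,0) = 0 for every x ∈ ℝ^k. Then there exists an infinitely differentiable function g : ℝ^k × ℝ → ℝ such that f(x,s) = s²·g(x,s) for all (x,s) ∈ ℝ^k × ℝ, and g(x,0) = (1/2)·(∂²f/∂s²)(x,0) for every x ∈ ℝ^k. (This second-order factorization is obtained in the paper by applying the Milnor lemma twice, in the proof of the 'nice level sets' lemma.) -/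
/-!
The proof is Hadamard's division lemma (Milnor's lemma), used twice. If `f` is smooth on `E × ℝ`
and `f (x, 0) = 0`, the fundamental theorem of calculus along the segment `t ↦ (x, t * s)` gives
`f (x, s) = s * ∫ t in 0..1, ∂ₛf (x, t * s)`, and the integral is smooth in `(x, s)` because a
smooth integrand on a compact interval may be differentiated under the integral sign arbitrarily
often (`contDiff_intervalIntegral_of_contDiff`). The first quotient vanishes at `s = 0`
since `∂ₛf` does, so the division can be repeated. The value of the second quotient `g` at `s = 0`
is read off by differentiating `s ^ 2 * g (x, s)` twice.
-/

open Set Filter Topology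

/-- Differentiation under the integral sign. The domination needed is the bound of the continuous
partial derivative on the compact set `closedBall x₀ 1 ×ˢ [0, 1]`. -/
lemma hasFDerivAt_intervalIntegral_of_contDiff {E G : Type} [NormedAddCommGroup E]
    [NormedSpace ℝ E] [FiniteDimensional ℝ E] [NormedAddCommGroup G] [NormedSpace ℝ G]
    {F : E × ℝ → G} (hF : ContDiff ℝ 1 F) (x₀ : E) :
    HasFDerivAt (fun x => ∫ t in (0 : ℝ)..1, F (x, t))
      (∫ t in (0 : ℝ)..1, (fderiv ℝ F (x₀, t)).comp (ContinuousLinearMap.inl ℝ E ℝ)) x₀ := by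
  have : ProperSpace E := FiniteDimensional.proper ℝ E
  have hF' : Continuous fun p : E × ℝ =>
      (fderiv ℝ F p).comp (ContinuousLinearMap.inl ℝ E ℝ) :=
    (hF.continuous_fderiv one_ne_zero).clm_comp continuous_const
  have hFc := hF.continuous
  obtain ⟨C, hC⟩ := ((isCompact_closedBall x₀ 1).prod
    (isCompact_Icc (a := (0 : ℝ)) (b := 1))).exists_bound_of_continuousOn hF'.continuousOn
  refine (intervalIntegral.hasFDerivAt_integral_of_dominated_of_fderiv_le
    (F := fun x t => F (x, t))
    (F' := fun x t => (fderiv ℝ F (x, t)).comp (ContinuousLinearMap.inl ℝ E ℝ))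
    (bound := fun _ => C)
    (Metric.closedBall_mem_nhds x₀ one_pos) ?_ ?_ ?_ ?_ ?_ ?_)
  · exact Eventually.of_forall fun x =>
      Continuous.aestronglyMeasurable (by fun_prop)
  · exact Continuous.intervalIntegrable (by fun_prop) _ _
  · exact (hF'.comp (by fun_prop : Continuous fun t : ℝ => (x₀, t))).aestronglyMeasurable
  · refine Eventually.of_forall fun t ht x hx => hC (x, t) ⟨hx, ?_⟩
    rw [uIoc_of_le zero_le_one] at ht
    exact Ioc_subset_Icc_self ht
  · exact intervalIntegrable_const
  · refine Eventually.of_forall fun t _ x _ => ?_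
    exact (hF.differentiable one_ne_zero (x, t)).hasFDerivAt.comp x (hasFDerivAt_prodMk_left x t)

lemma contDiff_intervalIntegral_of_contDiff {E : Type} [NormedAddCommGroup E]
    [NormedSpace ℝ E] [FiniteDimensional ℝ E] {F : E × ℝ → ℝ}
    (hF : ContDiff ℝ (⊤ : ℕ∞) F) :
    ContDiff ℝ (⊤ : ℕ∞) (fun x => ∫ t in (0 : ℝ)..1, F (x, t)) := by
  rw [contDiff_infty]
  intro n
  induction n generalizing F with
  | zero =>
    have := hF.continuous
    exact contDiff_zero.2
      (intervalIntegral.continuous_parametric_intervalIntegral_of_continuous' (by fun_prop) 0 1)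
  | succ n ih =>
    have hder := hasFDerivAt_intervalIntegral_of_contDiff
      (hF.of_le (by exact_mod_cast le_top) : ContDiff ℝ 1 F)
    have hF' : ContDiff ℝ (⊤ : ℕ∞) (fderiv ℝ F) := (contDiff_infty_iff_fderiv.1 hF).2
    push_cast
    refine contDiff_succ_iff_fderiv_apply.2
      ⟨fun x => (hder x).differentiableAt, by simp, fun y => ?_⟩
    -- The directional derivative along `y` is again a parametric integral of a smooth function.
    have key : (fun x => fderiv ℝ (fun x => ∫ t in (0 : ℝ)..1, F (x, t)) x y) =
        fun x => ∫ t in (0 : ℝ)..1, fderiv ℝ F (x, t) (y, 0) := by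
      funext x
      rw [(hder x).fderiv, ContinuousLinearMap.intervalIntegral_apply]
      · simp
      · refine Continuous.intervalIntegrable ?_ _ _
        exact (hF'.continuous.comp
          (by fun_prop : Continuous fun t : ℝ => (x, t))).clm_comp continuous_const
    rw [key]
    exact ih (F := fun p => fderiv ℝ F p (y, 0)) (hF'.clm_apply contDiff_const)

/-- Hadamard's division lemma with parameters. -/
lemma exists_contDiff_eq_mul {E : Type} [NormedAddCommGroup E]
    [NormedSpace ℝ E] [FiniteDimensional ℝ E] {f : E × ℝ → ℝ}
    (hf : ContDiff ℝ (⊤ : ℕ∞) f) (hf0 : ∀ x, f (x, 0) = 0) :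
    ∃ g : E × ℝ → ℝ, ContDiff ℝ (⊤ : ℕ∞) g ∧ ∀ x s, f (x, s) = s * g (x, s) := by
  have hf' : ContDiff ℝ (⊤ : ℕ∞) (fderiv ℝ f) := (contDiff_infty_iff_fderiv.1 hf).2
  refine ⟨fun p => ∫ t in (0 : ℝ)..1, fderiv ℝ f (p.1, t * p.2) (0, 1), ?_, fun x s => ?_⟩
  · exact contDiff_intervalIntegral_of_contDiff
      (F := fun q : (E × ℝ) × ℝ => fderiv ℝ f (q.1.1, q.2 * q.1.2) (0, 1))
      ((hf'.comp (by fun_prop)).clm_apply contDiff_const)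
  · have hd : ∀ t : ℝ, HasDerivAt (fun t : ℝ => f (x, t * s))
        (s * fderiv ℝ f (x, t * s) (0, 1)) t := by
      intro t
      have h1 : HasDerivAt (fun t : ℝ => (x, t * s)) ((0 : E), s) t := by
        simpa using (hasDerivAt_const t x).prodMk ((hasDerivAt_id t).mul_const s)
      have h2 := ((hf.differentiable (by simp)) (x, t * s)).hasFDerivAt.comp_hasDerivAt t h1
      have h3 : ((0 : E), s) = s • ((0 : E), (1 : ℝ)) := by simp
      rw [h3, map_smul, smul_eq_mul] at h2
      exact h2
    have hc : Continuous fun t : ℝ => s * fderiv ℝ f (x, t * s) (0, 1) :=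
      continuous_const.mul ((hf'.continuous.comp
        (by fun_prop : Continuous fun t : ℝ => (x, t * s))).clm_apply continuous_const)
    have h := intervalIntegral.integral_eq_sub_of_hasDerivAt (fun t _ => hd t)
      (hc.intervalIntegrable 0 1)
    rw [intervalIntegral.integral_const_mul] at h
    simpa [hf0] using h.symm


/-- Second-order factorization obtained by applying Milnor's lemma twice:
if `f : ℝᵏ × ℝ → ℝ` is smooth, vanishes on `ℝᵏ × {0}` and has vanishing first
`s`-derivative there, then `f (x, s) = s² * g (x, s)` for a smooth `g` with
`g (x, 0) = (1/2) ∂²f/∂s² (x, 0)`. -/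
theorem milnor_lemma_second_order (k : ℕ) (f : (Fin k → ℝ) × ℝ → ℝ)
    (hf : ContDiff ℝ (⊤ : ℕ∞) f) (hf0 : ∀ x : Fin k → ℝ, f (x, 0) = 0)
    (hf1 : ∀ x : Fin k → ℝ, deriv (fun s => f (x, s)) 0 = 0) :
    ∃ g : (Fin k → ℝ) × ℝ → ℝ, ContDiff ℝ (⊤ : ℕ∞) g ∧
      (∀ (x : Fin k → ℝ) (s : ℝ), f (x, s) = s ^ 2 * g (x, s)) ∧
      (∀ x : Fin k → ℝ,
        g (x, 0) = (1 / 2) * deriv (deriv (fun s => f (x, s))) 0) := by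

  have slice : ∀ {g : (Fin k → ℝ) × ℝ → ℝ}, ContDiff ℝ (⊤ : ℕ∞) g → ∀ x,
      ContDiff ℝ (⊤ : ℕ∞) (fun s => g (x, s)) := fun hg x => hg.comp (by fun_prop)
  obtain ⟨h, hh, hfh⟩ := exists_contDiff_eq_mul hf hf0
  have hh0 : ∀ x, h (x, 0) = 0 := by
    intro x
    have hd : HasDerivAt (fun s => h (x, s)) _ 0 :=
      ((slice hh x).differentiable (by simp) 0).hasDerivAt
    have h1 := ((hasDerivAt_id (0 : ℝ)).mul hd).deriv
    have h2 := hf1 x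
    simp only [hfh] at h2
    rw [show (fun s => s * h (x, s)) = id * fun s => h (x, s) from rfl, h1] at h2
    simpa using h2
  obtain ⟨g, hg, hhg⟩ := exists_contDiff_eq_mul hh hh0
  refine ⟨g, hg, fun x s => by rw [hfh, hhg]; ring, fun x => ?_⟩
  have hu := slice hg x
  have hd : ∀ s, HasDerivAt (fun s => g (x, s)) (deriv (fun s => g (x, s)) s) s := fun s =>
    (hu.differentiable (by simp) s).hasDerivAt
  have e1 : deriv (fun s => f (x, s)) =
      fun s => s * (2 * g (x, s) + s * deriv (fun s => g (x, s)) s) := by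
    funext s
    have : (fun s => f (x, s)) = fun s => s ^ 2 * g (x, s) := by
      funext s; rw [hfh, hhg]; ring
    rw [this]
    refine (((hasDerivAt_pow 2 s).mul (hd s)).congr_deriv ?_).deriv
    simp; ring
  have hu' : Differentiable ℝ (deriv fun s => g (x, s)) :=
    (contDiff_infty_iff_deriv.1 hu).2.differentiable (by simp)
  have e2 := (hasDerivAt_id (0 : ℝ)).mul
    (((hd 0).const_mul 2).add ((hasDerivAt_id (0 : ℝ)).mul (hu' 0).hasDerivAt))
  have e3 : deriv (deriv (fun s => f (x, s))) 0 = 2 * g (x, 0) := by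
    rw [e1]
    refine (e2.congr_deriv ?_).deriv
    simp
  rw [e3]; ring
end

section
/- Let m, N ≥ 1 and let φ : ℝ^{m+1} → ℝ^N be positively homogeneous of degree 1, i.e., φ(t·v) = t·φ(v) for all t > 0 and v ∈ ℝ^{m+1}, and assume φ is smooth on ℝ^{m+1}∖{0}. Then the following are equivalent: (i) the restriction of φ to ℝ^{m+1}∖{0} is an immersion, i.e., the Fréchet derivative of φ at every v ≠ 0 is injective; (ii) the restriction of φ to the unit sphere S^m is an immersion to which the Euler vector field on ℝ^N is nowhere tangent, i.e., for every v ∈ S^m the differential of φ|_{S^m} at v is injective and φ(v) does not lie in its image. (This is the paper's immersion criterion for cone-smooth maps, applied to the degree-1 homogeneous cone-derivative with the unit-sphere section of the radial projection.) -/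
open Manifold Metric Set

/-!
Let `L = Dφ(v)` at a unit vector `v`, and let `ι` be the inclusion of the sphere. By the chain rule
the differential of `φ ∘ ι` at `v` is `L ∘ dι`, where `dι` is injective with image `vᗮ`, and
differentiating `φ (t • v) = t • φ v` at `t = 1` gives Euler's identity `L v = φ v`. Since the
ambient space is `ℝ v ⊕ vᗮ`, the map `L` is injective if and only if its restriction to `vᗮ` is
injective and does not have `L v = φ v` in its image. A general `v ≠ 0` is a positive multiple
of a unit vector, and `Dφ` is invariant under positive rescaling of the base point.
-/

/-- Euler's identity: differentiate `φ (t • v) = t • φ v` at `t = 1`. -/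
lemma fderiv_apply_self_of_homogeneous {E F : Type*} [NormedAddCommGroup E] [NormedSpace ℝ E]
    [NormedAddCommGroup F] [NormedSpace ℝ F] {φ : E → F}
    (hhom : ∀ t : ℝ, 0 < t → ∀ v : E, φ (t • v) = t • φ v) {v : E}
    (hd : DifferentiableAt ℝ φ v) : fderiv ℝ φ v v = φ v := by
  have hray : HasDerivAt (fun t : ℝ => t • v) v 1 := by
    simpa using (hasDerivAt_id (1 : ℝ)).smul_const v
  have h1 : HasDerivAt (fun t : ℝ => φ (t • v)) (fderiv ℝ φ v v) 1 := by
    have hd' : HasFDerivAt φ (fderiv ℝ φ v) ((1 : ℝ) • v) := by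
      simpa using hd.hasFDerivAt
    exact hd'.comp_hasDerivAt (1 : ℝ) hray
  have h2 : HasDerivAt (fun t : ℝ => t • φ v) (φ v) 1 := by
    simpa using (hasDerivAt_id (1 : ℝ)).smul_const (φ v)
  refine h1.unique (h2.congr_of_eventuallyEq ?_)
  filter_upwards [lt_mem_nhds (zero_lt_one' ℝ)] with t ht
  exact hhom t ht v

/-- The derivative of a degree-1 homogeneous map is homogeneous of degree 0. -/
lemma fderiv_smul_of_homogeneous {E F : Type*} [NormedAddCommGroup E] [NormedSpace ℝ E]
    [NormedAddCommGroup F] [NormedSpace ℝ F] {φ : E → F}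
    (hhom : ∀ t : ℝ, 0 < t → ∀ v : E, φ (t • v) = t • φ v) {t : ℝ} (ht : 0 < t) (v : E) :
    fderiv ℝ φ (t • v) = fderiv ℝ φ v := by
  have h : (fun x => φ (t • x)) = t • φ := funext (hhom t ht)
  have h1 := fderiv_comp_smul (𝕜 := ℝ) (f := φ) (x := v) t
  rw [h, fderiv_const_smul_field] at h1
  exact (smul_right_injective _ ht.ne' h1).symm

/-- The linear algebra behind the criterion: if `D` is injective with image `vᗮ`, then `L` is
injective on the whole space iff `L ∘ D` is injective and its image avoids `L v`. -/
lemma injective_iff_of_range_eq_orthogonal {E F T : Type*} [NormedAddCommGroup E]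
    [InnerProductSpace ℝ E] [AddCommGroup F] [Module ℝ F] [AddCommGroup T] [Module ℝ T]
    (L : E →ₗ[ℝ] F) (D : T →ₗ[ℝ] E) {v : E} (hv : v ≠ 0) (hD : Function.Injective D)
    (hr : D.range = (ℝ ∙ v)ᗮ) :
    Function.Injective L ↔ Function.Injective (fun w => L (D w)) ∧ ∀ w, L (D w) ≠ L v := by
  constructor
  · refine fun h => ⟨h.comp hD, fun w hw => hv ?_⟩
    have hw' : D w ∈ (ℝ ∙ v)ᗮ := hr ▸ LinearMap.mem_range_self D w
    rw [h hw, Submodule.mem_orthogonal_singleton_iff_inner_right] at hw'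
    exact inner_self_eq_zero.mp hw'
  · rintro ⟨hi, hne⟩
    refine (injective_iff_map_eq_zero L).mpr fun x hx => ?_
    obtain ⟨y, hy, z, hz, rfl⟩ := (ℝ ∙ v).exists_add_mem_mem_orthogonal x
    obtain ⟨c, rfl⟩ := Submodule.mem_span_singleton.mp hy
    rw [← hr] at hz
    obtain ⟨w, rfl⟩ := hz
    rw [map_add, map_smul] at hx
    have hc : c = 0 := by
      by_contra hc
      -- a nonzero radial component would exhibit `L v` as the image of `-c⁻¹ • w`
      refine hne (-c⁻¹ • w) ?_
      rw [map_smul, map_smul, eq_neg_of_add_eq_zero_right hx, smul_neg, neg_smul, neg_neg,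
        smul_smul, inv_mul_cancel₀ hc, one_smul]
    subst hc
    have hw : w = 0 := hi (by simpa using hx)
    simp [hw]

theorem homogeneous_immersion_criterion (m N : ℕ) (hm : 1 ≤ m) (hN : 1 ≤ N)
    (φ : EuclideanSpace ℝ (Fin (m + 1)) → EuclideanSpace ℝ (Fin N))
    (hhom : ∀ t : ℝ, 0 < t → ∀ v : EuclideanSpace ℝ (Fin (m + 1)), φ (t • v) = t • φ v)
    (hsm : ContDiffOn ℝ (⊤ : ℕ∞) φ {(0 : EuclideanSpace ℝ (Fin (m + 1)))}ᶜ) :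
    (∀ v : EuclideanSpace ℝ (Fin (m + 1)), v ≠ 0 → Function.Injective (fderiv ℝ φ v)) ↔
      (∀ v : sphere (0 : EuclideanSpace ℝ (Fin (m + 1))) 1,
        Function.Injective (mfderiv (𝓡 m) 𝓘(ℝ, EuclideanSpace ℝ (Fin N))
          (fun p : sphere (0 : EuclideanSpace ℝ (Fin (m + 1))) 1 => φ p) v) ∧
        φ v ∉ Set.range fun w => mfderiv (𝓡 m) 𝓘(ℝ, EuclideanSpace ℝ (Fin N))
          (fun p : sphere (0 : EuclideanSpace ℝ (Fin (m + 1))) 1 => φ p) v w) := by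
  have : Fact (Module.finrank ℝ (EuclideanSpace ℝ (Fin (m + 1))) = m + 1) :=
    ⟨finrank_euclideanSpace_fin⟩
  have hdiff : ∀ v : EuclideanSpace ℝ (Fin (m + 1)), v ≠ 0 → DifferentiableAt ℝ φ v :=
    fun v hv => (hsm.contDiffAt (isOpen_compl_singleton.mem_nhds hv)).differentiableAt (by simp)
  have hsphere : ∀ v : sphere (0 : EuclideanSpace ℝ (Fin (m + 1))) 1,
      Function.Injective (fderiv ℝ φ v) ↔
        (Function.Injective (mfderiv (𝓡 m) 𝓘(ℝ, EuclideanSpace ℝ (Fin N))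
          (fun p : sphere (0 : EuclideanSpace ℝ (Fin (m + 1))) 1 => φ p) v) ∧
        φ v ∉ Set.range fun w => mfderiv (𝓡 m) 𝓘(ℝ, EuclideanSpace ℝ (Fin N))
          (fun p : sphere (0 : EuclideanSpace ℝ (Fin (m + 1))) 1 => φ p) v w) := by
    intro v
    have hv : (v : EuclideanSpace ℝ (Fin (m + 1))) ≠ 0 := ne_zero_of_mem_unit_sphere v
    have hι : MDifferentiableAt (𝓡 m) 𝓘(ℝ, EuclideanSpace ℝ (Fin (m + 1)))
        ((↑) : sphere (0 : EuclideanSpace ℝ (Fin (m + 1))) 1 → EuclideanSpace ℝ (Fin (m + 1))) v :=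
      (contMDiff_coe_sphere (m := 1) (n := m) v).mdifferentiableAt one_ne_zero
    have hchain : mfderiv (𝓡 m) 𝓘(ℝ, EuclideanSpace ℝ (Fin N))
        (fun p : sphere (0 : EuclideanSpace ℝ (Fin (m + 1))) 1 => φ p) v =
        (fderiv ℝ φ v).comp (mfderiv (𝓡 m) 𝓘(ℝ, EuclideanSpace ℝ (Fin (m + 1)))
          ((↑) : sphere (0 : EuclideanSpace ℝ (Fin (m + 1))) 1 → EuclideanSpace ℝ (Fin (m + 1))) v) := by
      rw [← mfderiv_eq_fderiv]
      exact mfderiv_comp v (hdiff v hv).mdifferentiableAt hι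
    rw [hchain]
    have key := injective_iff_of_range_eq_orthogonal (fderiv ℝ φ v).toLinearMap
      (mfderiv (𝓡 m) 𝓘(ℝ, EuclideanSpace ℝ (Fin (m + 1)))
          ((↑) : sphere (0 : EuclideanSpace ℝ (Fin (m + 1))) 1 → EuclideanSpace ℝ (Fin (m + 1))) v).toLinearMap hv
      (injective_mvfderiv_subtypeVal_sphere v) (range_mvfderiv_subtypeVal v)
    refine key.trans (and_congr Iff.rfl ?_)
    have he := fderiv_apply_self_of_homogeneous hhom (hdiff v hv)
    exact ⟨fun h ⟨w, hw⟩ => h w (hw.trans he.symm), fun h w hw => h ⟨w, hw.trans he⟩⟩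
  constructor
  · exact fun h v => (hsphere v).mp (h v (ne_zero_of_mem_unit_sphere v))
  · intro h v hv
    have hu : ‖v‖⁻¹ • v ∈ sphere (0 : EuclideanSpace ℝ (Fin (m + 1))) 1 := by
      simp [norm_smul, hv]
    rw [← fderiv_smul_of_homogeneous hhom (inv_pos.mpr (norm_pos_iff.mpr hv)) v]
    exact (hsphere ⟨_, hu⟩).mpr (h ⟨_, hu⟩)
end
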